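/- Let p, q ∈ R be idempotents such that p - q and (1-p) - q are both group invertible. Then p*q - q*p is group invertible and (p*q - q*p)^# = -q1^# * (p-q1)^# * q2 + q3 * q1^# * (p-q1)^#. -/

import Mathlib

/-!
Put `a = p - q` and `b = 1 - p - q`. These anticommute, `a * b = q * p - p * q`, and `a ^ 2`,
`b ^ 2` commute with `p` and `q`, with `a ^ 2 * p = p - p * q * p` and `b ^ 2 * p = p * q * p`.
An element intertwining `a` with `a'` intertwines their group inverses, so all these relations pass
to `A = a^#` and `B = b^#`, and reverse order laws give `(p * q - q * p)^# = -(B * A)`,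
`(p - p * q * p)^# = p * A ^ 2` and `(p * q * p)^# = p * B ^ 2`. The claimed expression is then
`B ^ 2 * A ^ 2 * (q * p - p * q) = (-(B * A)) ^ 2 * (p * q - q * p) = -(B * A)`.
-/

variable {R : Type*} [Ring R]

/-- `c` is a group inverse of `a`. -/
def IsGroupInvOf (a c : R) : Prop := a * c * a = a ∧ c * a * c = c ∧ a * c = c * a

/-- `a` is group invertible. -/
def GroupInvertible (a : R) : Prop := ∃ c, IsGroupInvOf a c

/-- The group inverse `a^#` (junk value `0` if it does not exist). -/
noncomputable def gi (a : R) : R :=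
  haveI := Classical.dec (GroupInvertible a)
  if h : GroupInvertible a then h.choose else 0

/-- The spectral idempotent `a^π = 1 - a * a^#`. -/
noncomputable def sp (a : R) : R := 1 - a * gi a

section Anticommute

variable {a a' b : R}

lemma semiconjBy_neg_symm (h : SemiconjBy a b (-b)) : SemiconjBy b a (-a) := by
  rw [SemiconjBy, neg_mul, h.eq, neg_mul, neg_neg]

lemma commute_mul_of_semiconjBy_neg (h : SemiconjBy a b (-b)) (h' : SemiconjBy a' b (-b)) :
    Commute (a * a') b := by
  simpa only [Commute, neg_neg] using h.neg_right.mul_left h'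

lemma mul_sq_of_semiconjBy_neg (h : SemiconjBy a b (-b)) : (a * b) ^ 2 = -(a ^ 2 * b ^ 2) := by
  calc (a * b) ^ 2 = a * (b * a) * b := by simp only [sq, mul_assoc]
    _ = -(a ^ 2 * b ^ 2) := by
      rw [(semiconjBy_neg_symm h).eq]
      simp only [sq, neg_mul, mul_neg, mul_assoc]

end Anticommute

namespace IsGroupInvOf

variable {a b c d x : R}

lemma commute (h : IsGroupInvOf a c) : Commute a c := h.2.2

lemma symm (h : IsGroupInvOf a c) : IsGroupInvOf c a := ⟨h.2.1, h.1, h.2.2.symm⟩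

lemma neg (h : IsGroupInvOf a c) : IsGroupInvOf (-a) (-c) := by
  simpa [IsGroupInvOf] using h

lemma sq_mul (h : IsGroupInvOf a c) : c ^ 2 * a = c := by
  rw [sq, mul_assoc, ← h.commute.eq, ← mul_assoc, h.2.1]

lemma mul_sq (h : IsGroupInvOf a c) : a * c ^ 2 = c := by
  rw [(h.commute.pow_right 2).eq, h.sq_mul]

lemma pow_three_mul_sq (h : IsGroupInvOf a c) : a ^ 3 * c ^ 2 = a := by
  rw [pow_succ, mul_assoc, h.mul_sq, h.symm.sq_mul]

lemma semiconjBy (hb : IsGroupInvOf b d) (ha : IsGroupInvOf a c) (hx : SemiconjBy x b a) :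
    SemiconjBy x d c := by
  calc x * d = x * b * d ^ 2 := by rw [mul_assoc, hb.mul_sq]
    _ = a * x * d ^ 2 := by rw [hx.eq]
    _ = c ^ 2 * a ^ 3 * x * d ^ 2 := by
      rw [← (ha.commute.pow_pow 3 2).eq, ha.pow_three_mul_sq]
    _ = c ^ 2 * (x * (b ^ 3 * d ^ 2)) := by
      rw [mul_assoc (c ^ 2), ← (hx.pow_right 3).eq]
      simp only [mul_assoc]
    _ = c ^ 2 * a * x := by rw [hb.pow_three_mul_sq, hx.eq, mul_assoc]
    _ = c * x := by rw [ha.sq_mul]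

lemma commute_right (h : IsGroupInvOf a c) (hx : Commute x a) : Commute x c :=
  h.semiconjBy h hx

lemma unique (hc : IsGroupInvOf a c) (hd : IsGroupInvOf a d) : c = d := by
  simpa only [SemiconjBy, one_mul, mul_one] using hc.semiconjBy hd (SemiconjBy.one_left a)

lemma mul (ha : IsGroupInvOf a c) (hb : IsGroupInvOf b d) (hab : Commute (a * c) b)
    (hba : Commute (b * d) a) : IsGroupInvOf (a * b) (d * c) := by
  have had : Commute (a * c) d := hb.commute_right hab
  have left_eq : a * b * (d * c) = b * d * (a * c) := by
    rw [← mul_assoc (b * d), hba.eq]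
    simp only [mul_assoc]
  have right_eq : d * c * (a * b) = b * d * (a * c) := by
    calc d * c * (a * b) = d * (a * c) * b := by rw [ha.commute.eq]; simp only [mul_assoc]
      _ = a * c * (b * d) := by rw [← had.eq, mul_assoc, hb.commute.eq]
      _ = b * d * (a * c) := (hab.mul_right had).eq
  refine ⟨?_, ?_, left_eq.trans right_eq.symm⟩
  · calc a * b * (d * c) * (a * b) = b * d * (a * c * a) * b := by
          rw [left_eq]; simp only [mul_assoc]
      _ = a * (b * d * b) := by rw [ha.1, hba.eq]; simp only [mul_assoc]
      _ = a * b := by rw [hb.1]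
  · calc d * c * (a * b) * (d * c) = a * c * (b * d * d) * c := by
          rw [right_eq, ← (hab.mul_right had).eq]; simp only [mul_assoc]
      _ = d * (a * c * c) := by
          rw [mul_assoc b, ← sq, hb.mul_sq, had.eq]; simp only [mul_assoc]
      _ = d * c := by rw [mul_assoc a, ← sq, ha.mul_sq]

lemma mul_of_commute (ha : IsGroupInvOf a c) (hb : IsGroupInvOf b d) (h : Commute a b) :
    IsGroupInvOf (a * b) (d * c) :=
  ha.mul hb (h.mul_left (ha.commute_right h.symm).symm)
    (h.symm.mul_left (hb.commute_right h).symm)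

lemma semiconjBy_neg_right (hb : IsGroupInvOf b d) (h : SemiconjBy a b (-b)) :
    SemiconjBy a d (-d) :=
  hb.semiconjBy hb.neg h

lemma mul_of_semiconjBy_neg (ha : IsGroupInvOf a c) (hb : IsGroupInvOf b d)
    (h : SemiconjBy a b (-b)) : IsGroupInvOf (a * b) (d * c) := by
  have h' : SemiconjBy b a (-a) := semiconjBy_neg_symm h
  exact ha.mul hb
    (commute_mul_of_semiconjBy_neg h (semiconjBy_neg_symm (ha.semiconjBy_neg_right h')))
    (commute_mul_of_semiconjBy_neg h' (semiconjBy_neg_symm (hb.semiconjBy_neg_right h)))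

lemma pow (h : IsGroupInvOf a c) (n : ℕ) : IsGroupInvOf (a ^ n) (c ^ n) := by
  induction n with
  | zero => simp [IsGroupInvOf]
  | succ n ih =>
    rw [pow_succ, pow_succ']
    exact ih.mul_of_commute h (Commute.pow_self a n)

lemma of_isIdempotentElem (h : IsIdempotentElem a) : IsGroupInvOf a a := by
  simp only [IsGroupInvOf, h.eq, and_self]

end IsGroupInvOf

lemma GroupInvertible.isGroupInvOf_gi {a : R} (h : GroupInvertible a) : IsGroupInvOf a (gi a) := by
  rw [gi, dif_pos h]
  exact h.choose_spec

lemma IsGroupInvOf.gi_eq {a c : R} (h : IsGroupInvOf a c) : gi a = c :=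
  GroupInvertible.isGroupInvOf_gi ⟨c, h⟩ |>.unique h

section Idempotents

variable {p q A B : R} (hp : IsIdempotentElem p) (hq : IsIdempotentElem q)

include hp hq

lemma sub_mul_one_sub_sub_of_isIdempotentElem : (p - q) * (1 - p - q) = q * p - p * q := by
  simp only [mul_sub, sub_mul, mul_one, hp.eq, hq.eq]
  abel

lemma one_sub_sub_mul_sub_of_isIdempotentElem : (1 - p - q) * (p - q) = p * q - q * p := by
  simp only [mul_sub, sub_mul, one_mul, hp.eq, hq.eq]
  abel

lemma semiconjBy_neg_sub_one_sub_sub : SemiconjBy (p - q) (1 - p - q) (-(1 - p - q)) := by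
  rw [SemiconjBy, neg_mul, sub_mul_one_sub_sub_of_isIdempotentElem hp hq,
    one_sub_sub_mul_sub_of_isIdempotentElem hp hq, neg_sub]

lemma sub_sq_of_isIdempotentElem : (p - q) ^ 2 = p - p * q - q * p + q := by
  simp only [sq, mul_sub, sub_mul, hp.eq, hq.eq]
  abel

lemma sub_sq_mul_of_isIdempotentElem : (p - q) ^ 2 * p = p - p * q * p := by
  simp only [sub_sq_of_isIdempotentElem hp hq, sub_mul, add_mul, hp.eq, mul_assoc]
  abel

lemma mul_sub_sq_of_isIdempotentElem : p * (p - q) ^ 2 = p - p * q * p := by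
  simp only [sub_sq_of_isIdempotentElem hp hq, mul_sub, mul_add, ← mul_assoc, hp.eq]
  abel

lemma commute_sub_sq_of_isIdempotentElem : Commute p ((p - q) ^ 2) :=
  (mul_sub_sq_of_isIdempotentElem hp hq).trans (sub_sq_mul_of_isIdempotentElem hp hq).symm

lemma commute_sq_of_isGroupInvOf_sub (hA : IsGroupInvOf (p - q) A) : Commute p (A ^ 2) :=
  (hA.pow 2).commute_right (commute_sub_sq_of_isIdempotentElem hp hq)

lemma commute_sq_of_isGroupInvOf_one_sub_sub (hB : IsGroupInvOf (1 - p - q) B) :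
    Commute p (B ^ 2) := by
  have hB' : Commute (1 - p) (B ^ 2) := commute_sq_of_isGroupInvOf_sub hp.one_sub hq hB
  simpa only [sub_sub_cancel] using (Commute.one_left _).sub_left hB'

lemma commute_sq_mul_sq (hA : IsGroupInvOf (p - q) A) (hB : IsGroupInvOf (1 - p - q) B) :
    Commute p (B ^ 2 * A ^ 2) :=
  (commute_sq_of_isGroupInvOf_one_sub_sub hp hq hB).mul_right
    (commute_sq_of_isGroupInvOf_sub hp hq hA)

lemma isGroupInvOf_sub_mul_mul (hA : IsGroupInvOf (p - q) A) :
    IsGroupInvOf (p - p * q * p) (p * A ^ 2) := by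
  rw [← sub_sq_mul_of_isIdempotentElem hp hq]
  exact (hA.pow 2).mul_of_commute (.of_isIdempotentElem hp)
    (commute_sub_sq_of_isIdempotentElem hp hq).symm

lemma isGroupInvOf_mul_mul (hB : IsGroupInvOf (1 - p - q) B) :
    IsGroupInvOf (p * q * p) (p * B ^ 2) := by
  have hB' : IsGroupInvOf (p - (1 - q)) (-B) := by
    simpa only [neg_sub, sub_right_comm 1 p q] using hB.neg
  simpa only [mul_sub, sub_mul, mul_one, hp.eq, sub_sub_cancel, neg_sq] using
    isGroupInvOf_sub_mul_mul hp hq.one_sub hB'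

lemma gi_mul_mul_mul_gi_sub_mul_mul (hA : IsGroupInvOf (p - q) A)
    (hB : IsGroupInvOf (1 - p - q) B) :
    gi (p * q * p) * gi (p - p * q * p) = p * (B ^ 2 * A ^ 2) := by
  have hpB : Commute p (B ^ 2) := commute_sq_of_isGroupInvOf_one_sub_sub hp hq hB
  rw [(isGroupInvOf_mul_mul hp hq hB).gi_eq, (isGroupInvOf_sub_mul_mul hp hq hA).gi_eq,
    hpB.eq, mul_assoc, ← mul_assoc p p, hp.eq, ← mul_assoc, ← hpB.eq, mul_assoc]

lemma isGroupInvOf_commutator (hA : IsGroupInvOf (p - q) A) (hB : IsGroupInvOf (1 - p - q) B) :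
    IsGroupInvOf (p * q - q * p) (-(B * A)) := by
  rw [← neg_sub, ← sub_mul_one_sub_sub_of_isIdempotentElem hp hq]
  exact (hA.mul_of_semiconjBy_neg hB (semiconjBy_neg_sub_one_sub_sub hp hq)).neg

lemma sq_mul_sq_mul_commutator (hA : IsGroupInvOf (p - q) A) (hB : IsGroupInvOf (1 - p - q) B) :
    B ^ 2 * A ^ 2 * (q * p - p * q) = -(B * A) := by
  have hBA : SemiconjBy B A (-A) := hA.semiconjBy_neg_right <| semiconjBy_neg_symm <|
    hB.semiconjBy_neg_right (semiconjBy_neg_sub_one_sub_sub hp hq)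
  calc B ^ 2 * A ^ 2 * (q * p - p * q) = (-(B * A)) ^ 2 * (p * q - q * p) := by
        rw [neg_sq, mul_sq_of_semiconjBy_neg hBA, ← neg_sub (p * q), mul_neg, neg_mul]
    _ = -(B * A) := (isGroupInvOf_commutator hp hq hA hB).sq_mul

end Idempotents

lemma neg_mul_corner_add_corner_mul {p q u : R} (hp : IsIdempotentElem p) (hpu : Commute p u)
    (hqu : Commute q u) :
    -(p * u * (p * q * (1 - p))) + (1 - p) * q * p * (p * u) = u * (q * p - p * q) := by
  have upper : p * u * (p * q * (1 - p)) = u * (p * q * (1 - p)) := by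
    rw [hpu.eq, mul_assoc, mul_assoc p, ← mul_assoc p, hp.eq]
  have lower : (1 - p) * q * p * (p * u) = u * ((1 - p) * q * p) := by
    rw [← mul_assoc, mul_assoc _ p p, hp.eq]
    exact ((((Commute.one_left u).sub_left hpu).mul_left hqu).mul_left hpu).eq
  rw [upper, lower]
  noncomm_ring

theorem group_inv_commutator (p q q1 q2 q3 q4 : R) (hp : p * p = p) (hq : q * q = q)
    (h1 : q1 = p * q * p) (h2 : q2 = p * q * (1 - p))
    (h3 : q3 = (1 - p) * q * p) (h4 : q4 = (1 - p) * q * (1 - p))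
    (hpq : GroupInvertible (p - q)) (hpbq : GroupInvertible ((1 - p) - q)) :
    GroupInvertible (p * q - q * p) ∧
      gi (p * q - q * p) =
        -(gi q1 * gi (p - q1) * q2) + q3 * gi q1 * gi (p - q1) := by
  obtain ⟨A, hA⟩ := hpq
  obtain ⟨B, hB⟩ := hpbq
  have hcomm : IsGroupInvOf (p * q - q * p) (-(B * A)) := isGroupInvOf_commutator hp hq hA hB
  have hpu : Commute p (B ^ 2 * A ^ 2) := commute_sq_mul_sq hp hq hA hB
  have hqu : Commute q (B ^ 2 * A ^ 2) := by
    have hA' : IsGroupInvOf (q - p) (-A) := by simpa only [neg_sub] using hA.neg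
    have hB' : IsGroupInvOf (1 - q - p) B := by rwa [sub_right_comm]
    simpa only [neg_sq] using commute_sq_mul_sq hq hp hA' hB'
  have hprod : gi q1 * gi (p - q1) = p * (B ^ 2 * A ^ 2) := by
    rw [h1, gi_mul_mul_mul_gi_sub_mul_mul hp hq hA hB]
  refine ⟨⟨_, hcomm⟩, ?_⟩
  rw [hcomm.gi_eq, mul_assoc q3, hprod, h2, h3, neg_mul_corner_add_corner_mul hp hpu hqu,
    sq_mul_sq_mul_commutator hp hq hA hB]
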